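/- Let A be a finite-dimensional real affine space over V and δ : A → ℝ a quadratic function. There exists a unique symmetric bilinear form B on V such that 2δ(P) + 2δ(Q) − 4δ(midpoint(P,Q)) = (1/2)·B(Q − P, Q − P) for all P, Q ∈ A. -/

import Mathlib

/-!
A quadratic function is exactly one whose restriction to every line is a polynomial of degree at
most `2` (the defining identity is Lagrange interpolation at `0, 1/2, 1`). After choosing an origin,
split `f v = δ (v +ᵥ O)` as `f 0 + l + q` with `l` odd and `q` even, `q 0 = 0`. Both are again
quadratic along lines, so `l` is homogeneous of degree `1` and `q` of degree `2`.
Comparing the polynomials `t ↦ g (u + t w)` and `s ↦ g (w + s u)` through `s = t⁻¹` shows that `l` is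
additive (`QuadOnLines.odd_add`) and that `q (u + t w) = q u + b t + q w t²`
(`QuadOnLines.even_line`). The latter yields the parallelogram law, hence biadditivity of the polar
of `q` by the Jordan–von Neumann argument, and also its homogeneity. This polar form is the Hessian;
uniqueness is polarization.
-/

/-- A function `δ : A → ℝ` on a real affine space is *quadratic* if for all points
`P, Q` and all `α, β ∈ ℝ` with `α + β = 1`,
`δ(α·P + β·Q) = α(α−β)·δ(P) + β(β−α)·δ(Q) + 4αβ·δ(midpoint(P,Q))`. -/
def IsQuadraticFn {V A : Type*} [AddCommGroup V] [Module ℝ V] [AddTorsor V A]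
    (δ : A → ℝ) : Prop :=
  ∀ (P Q : A) (α β : ℝ), α + β = 1 →
    δ (AffineMap.lineMap P Q β) =
      α * (α - β) * δ P + β * (β - α) * δ Q + 4 * α * β * δ (midpoint ℝ P Q)

/-- `B` is the Hessian of `δ`:
`2δ(P) + 2δ(Q) − 4δ(midpoint(P,Q)) = (1/2)·B(Q−P, Q−P)` for all `P, Q`. -/
def IsHessianOf {V A : Type*} [AddCommGroup V] [Module ℝ V] [AddTorsor V A]
    (δ : A → ℝ) (B : LinearMap.BilinForm ℝ V) : Prop :=
  ∀ P Q : A, 2 * δ P + 2 * δ Q - 4 * δ (midpoint ℝ P Q) =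
    (1/2 : ℝ) * B (Q -ᵥ P) (Q -ᵥ P)

/-- The restriction of `g` to every line is a polynomial of degree at most `2`. -/
def QuadOnLines {V : Type*} [AddCommGroup V] [Module ℝ V] (g : V → ℝ) : Prop :=
  ∀ u w : V, ∃ b c : ℝ, ∀ t : ℝ, g (u + t • w) = g u + b * t + c * t ^ 2

namespace QuadOnLines

variable {V : Type*} [AddCommGroup V] [Module ℝ V] {g : V → ℝ}

theorem odd_smul (hg : QuadOnLines g) (ho : ∀ v, g (-v) = -g v) (t : ℝ) (v : V) :
    g (t • v) = t * g v := by
  have h0 : g 0 = 0 := by have := ho 0; rw [neg_zero] at this; linarith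
  obtain ⟨b, c, h⟩ := hg 0 v
  simp only [zero_add, h0] at h
  have h1 := h 1
  have h2 := h (-1)
  rw [one_smul] at h1
  rw [neg_one_smul, ho] at h2
  have hc : c = 0 := by linarith
  have hb : b = g v := by linarith
  rw [h, hc, hb]; ring

theorem even_smul (hg : QuadOnLines g) (h0 : g 0 = 0) (he : ∀ v, g (-v) = g v) (t : ℝ) (v : V) :
    g (t • v) = t ^ 2 * g v := by
  obtain ⟨b, c, h⟩ := hg 0 v
  simp only [zero_add, h0] at h
  have h1 := h 1
  have h2 := h (-1)
  rw [one_smul] at h1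
  rw [neg_one_smul, he] at h2
  have hb : b = 0 := by linarith
  have hc : c = g v := by linarith
  rw [h, hc, hb]; ring

theorem smul_swap (u w : V) {t : ℝ} (ht : t ≠ 0) : u + t • w = t • (w + t⁻¹ • u) := by
  rw [smul_add, smul_smul, mul_inv_cancel₀ ht, one_smul, add_comm]

/-- If `g (u + t w) = g u + b t + c t²` and `g (w + s u) = g w + b' s + c' s²`, homogeneity gives
`g u + b t + c t² = t g w + b' + c' / t` for `t ≠ 0`, which forces `c = 0` and `b = g w`. -/
theorem odd_add (hg : QuadOnLines g) (ho : ∀ v, g (-v) = -g v) (u w : V) :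
    g (u + w) = g u + g w := by
  obtain ⟨b, c, h⟩ := hg u w
  obtain ⟨b', c', h'⟩ := hg w u
  have key : ∀ t : ℝ, t ≠ 0 →
      g u + b * t + c * t ^ 2 = t * (g w + b' * t⁻¹ + c' * t⁻¹ ^ 2) := fun t ht => by
    rw [← h, ← h', ← hg.odd_smul ho, smul_swap u w ht]
  have k1 := key 1 (by norm_num)
  have k2 := key (-1) (by norm_num)
  have k3 := key 2 (by norm_num)
  have k4 := key (-2) (by norm_num)
  have h1 := h 1
  rw [one_smul] at h1
  norm_num at k1 k2 k3 k4
  linarith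

/-- The same comparison as in `odd_add`, now with `g u + b t + c t² = t² g w + b' t + c'`,
forces `c = g w`. -/
theorem even_line (hg : QuadOnLines g) (h0 : g 0 = 0) (he : ∀ v, g (-v) = g v) (u w : V) :
    ∃ b : ℝ, ∀ t : ℝ, g (u + t • w) = g u + b * t + g w * t ^ 2 := by
  obtain ⟨b, c, h⟩ := hg u w
  obtain ⟨b', c', h'⟩ := hg w u
  have key : ∀ t : ℝ, t ≠ 0 →
      g u + b * t + c * t ^ 2 = t ^ 2 * (g w + b' * t⁻¹ + c' * t⁻¹ ^ 2) := fun t ht => by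
    rw [← h, ← h', ← hg.even_smul h0 he, smul_swap u w ht]
  have k1 := key 1 (by norm_num)
  have k2 := key (-1) (by norm_num)
  have k3 := key 2 (by norm_num)
  norm_num at k1 k2 k3
  have hc : c = g w := by linarith
  exact ⟨b, fun t => by rw [h, hc]⟩

theorem even_parallelogram (hg : QuadOnLines g) (h0 : g 0 = 0) (he : ∀ v, g (-v) = g v)
    (u w : V) : g (u + w) + g (u - w) = 2 * g u + 2 * g w := by
  obtain ⟨b, h⟩ := hg.even_line h0 he u w
  have h1 := h 1
  have h2 := h (-1)
  rw [one_smul] at h1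
  rw [neg_one_smul, ← sub_eq_add_neg] at h2
  linarith

theorem polar_smul (hg : QuadOnLines g) (h0 : g 0 = 0) (he : ∀ v, g (-v) = g v)
    (t : ℝ) (u w : V) :
    g (u + t • w) - g u - g (t • w) = t * (g (u + w) - g u - g w) := by
  obtain ⟨b, h⟩ := hg.even_line h0 he u w
  have h1 := h 1
  rw [one_smul] at h1
  rw [h, h1, hg.even_smul h0 he]; ring

theorem polar_add (hg : QuadOnLines g) (h0 : g 0 = 0) (he : ∀ v, g (-v) = g v) (u v w : V) :
    g (u + (v + w)) - g u - g (v + w) =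
      (g (u + v) - g u - g v) + (g (u + w) - g u - g w) := by
  have p := hg.even_parallelogram h0 he
  have p1 := p (u + w) v
  have p2 := p u (v - w)
  have p3 := p (u + v) w
  have p4 := p v w
  rw [show u + w + v = u + (v + w) by abel, show u + w - v = u - (v - w) by abel] at p1
  rw [show u + v + w = u + (v + w) by abel, show u + v - w = u + (v - w) by abel] at p3
  linarith

end QuadOnLines

theorem IsQuadraticFn.quadOnLines {V A : Type*} [AddCommGroup V] [Module ℝ V] [AddTorsor V A]
    {δ : A → ℝ} (hδ : IsQuadraticFn δ) (O : A) : QuadOnLines fun v : V => δ (v +ᵥ O) := by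
  intro u w
  -- the coefficients of the interpolation polynomial through the values at `t = 0, 1/2, 1`
  refine ⟨4 * δ (midpoint ℝ (u +ᵥ O) ((u + w) +ᵥ O)) - 3 * δ (u +ᵥ O) - δ ((u + w) +ᵥ O),
    2 * δ (u +ᵥ O) + 2 * δ ((u + w) +ᵥ O) - 4 * δ (midpoint ℝ (u +ᵥ O) ((u + w) +ᵥ O)),
    fun t => ?_⟩
  have h := hδ (u +ᵥ O) ((u + w) +ᵥ O) (1 - t) t (by ring)
  rw [AffineMap.lineMap_apply, vadd_vsub_vadd_cancel_right, add_sub_cancel_left, vadd_vadd,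
    add_comm (t • w) u] at h
  beta_reduce
  rw [h]; ring

/-- Every quadratic function `δ : A → ℝ` has a unique symmetric
Hessian bilinear form `B` on `V`. -/
theorem stmt9 {V A : Type*} [AddCommGroup V] [Module ℝ V] [AddTorsor V A]
    [FiniteDimensional ℝ V] (δ : A → ℝ) (hδ : IsQuadraticFn δ) :
    ∃! B : LinearMap.BilinForm ℝ V, (∀ x y, B x y = B y x) ∧ IsHessianOf δ B := by
  obtain ⟨O⟩ : Nonempty A := AddTorsor.nonempty (G := V)
  set f : V → ℝ := fun v => δ (v +ᵥ O)
  have hfq : QuadOnLines f := hδ.quadOnLines O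
  set q : V → ℝ := fun v => (f v + f (-v)) / 2 - f 0 with hq
  set l : V → ℝ := fun v => (f v - f (-v)) / 2 with hl
  have hqq : QuadOnLines q := by
    intro u w
    obtain ⟨b, c, h⟩ := hfq u w
    obtain ⟨b', c', h'⟩ := hfq (-u) (-w)
    refine ⟨(b + b') / 2, (c + c') / 2, fun t => ?_⟩
    simp only [hq]
    rw [neg_add, ← smul_neg, h, h']; ring
  have hlq : QuadOnLines l := by
    intro u w
    obtain ⟨b, c, h⟩ := hfq u w
    obtain ⟨b', c', h'⟩ := hfq (-u) (-w)
    refine ⟨(b - b') / 2, (c - c') / 2, fun t => ?_⟩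
    simp only [hl]
    rw [neg_add, ← smul_neg, h, h']; ring
  have hq0 : q 0 = 0 := by simp only [hq, neg_zero]; ring
  have hqe : ∀ v, q (-v) = q v := fun v => by simp only [hq, neg_neg]; ring
  have hlo : ∀ v, l (-v) = -l v := fun v => by simp only [hl, neg_neg]; ring
  have hdec : ∀ v, f v = f 0 + l v + q v := fun v => by simp only [hq, hl]; ring
  have hsymm : ∀ x y, q (x + y) - q x - q y = q (y + x) - q y - q x := fun x y => by
    rw [add_comm x y]; ring
  let B : LinearMap.BilinForm ℝ V := LinearMap.mk₂ ℝ (fun x y => q (x + y) - q x - q y)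
    (fun x y z => by
      rw [hsymm, hqq.polar_add hq0 hqe, hsymm z x, hsymm z y])
    (fun c x y => by
      rw [hsymm, hqq.polar_smul hq0 hqe, hsymm y x, smul_eq_mul])
    (fun x y z => hqq.polar_add hq0 hqe x y z)
    (fun c x y => by rw [hqq.polar_smul hq0 hqe, smul_eq_mul])
  have hB : ∀ x y, B x y = q (x + y) - q x - q y := fun x y => rfl
  have hBH : IsHessianOf δ B := by
    intro P Q
    obtain ⟨x, rfl⟩ : ∃ x : V, x +ᵥ O = P := ⟨P -ᵥ O, vsub_vadd _ _⟩
    obtain ⟨y, rfl⟩ : ∃ y : V, y +ᵥ O = Q := ⟨Q -ᵥ O, vsub_vadd _ _⟩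
    have hm : midpoint ℝ (x +ᵥ O) (y +ᵥ O) = ((1 / 2 : ℝ) • (y + x)) +ᵥ O := by
      rw [midpoint, AffineMap.lineMap_apply, vadd_vsub_vadd_cancel_right, vadd_vadd]
      congr 1
      rw [invOf_eq_inv]
      module
    rw [hm, vadd_vsub_vadd_cancel_right, hB]
    change 2 * f x + 2 * f y - 4 * f ((1 / 2 : ℝ) • (y + x)) = _
    have h2 : q (y - x + (y - x)) = 4 * q (y - x) := by
      rw [← two_smul ℝ, hqq.even_smul hq0 hqe]; norm_num
    have hp := hqq.even_parallelogram hq0 hqe y x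
    rw [h2, hdec x, hdec y, hdec ((1 / 2 : ℝ) • (y + x)), hqq.even_smul hq0 hqe,
      hlq.odd_smul hlo, hlq.odd_add hlo]
    linarith
  refine ⟨B, ⟨fun x y => by rw [hB, hB, hsymm], hBH⟩, ?_⟩
  rintro C ⟨hCs, hCH⟩
  have hBd : ∀ v, B v v = C v v := fun v => by
    have h1 := hBH O (v +ᵥ O)
    have h2 := hCH O (v +ᵥ O)
    rw [vadd_vsub] at h1 h2
    linarith
  ext x y
  have e := hBd (x + y)
  have ex := hBd x
  have ey := hBd y
  have es : B x y = B y x := by rw [hB, hB, hsymm]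
  have ec := hCs x y
  simp only [map_add, LinearMap.add_apply] at e
  linarith
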